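/- If G is a 2-connected finite simple graph whose longest cycle has length at most c, then the treedepth of G is at most c²/2. -/

import Mathlib

/-- A finite simple graph is 2-connected: it has at least 3 vertices and deleting
any single vertex leaves it connected. -/
def TwoConnected {V : Type*} [Fintype V] (G : SimpleGraph V) : Prop :=
  3 ≤ Fintype.card V ∧ ∀ v : V, (G.induce ({v}ᶜ : Set V)).Connected

/-- `TreedepthLE G d`: G has treedepth at most `d`, i.e. G is a subgraph of the
closure of a rooted forest of height at most `d - 1` on its vertex set. The forest
is encoded by a parent function `par` whose fixed points are the roots; height at
most `d - 1` means iterating `par` `d - 1` times from any vertex reaches a root,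
and every edge of G must join an ancestor-descendant pair of the forest. -/
def TreedepthLE {V : Type*} (G : SimpleGraph V) (d : ℕ) : Prop :=
  ∃ par : V → V,
    (∀ v : V, par^[d] v = par^[d - 1] v) ∧
    (∀ u v : V, G.Adj u v → (∃ k : ℕ, par^[k] v = u) ∨ (∃ k : ℕ, par^[k] u = v))

/-! By Whitney's theorem any two vertices of `G` lie on a common cycle. Take such a cycle `C`
through the ends of a path `P`: it cuts `P` into at most `|C| - 1` ears of `C`, and an ear of length
`m` closes up with the longer arc of `C` to a cycle of length at least `m + |C| / 2`, whence
`m ≤ c - |C| / 2`. So every path has length at most `c (c - 1) / 2`.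

A depth-first search forest arises by deleting one root from each component and choosing the next
roots among the neighbours of the deleted ones. Paths that start at the new roots then extend to
longer paths that start at the old ones, so the height of the forest is at most the length of a
longest path. -/

open SimpleGraph

section Ears

variable {V : Type*} {G : SimpleGraph V} {u v w : V}

/-- `IsEar S p` says that the path `p` joins two distinct vertices of `S` and meets `S` only in
these. Single edges are allowed, so that a path with both ends in `S` is a concatenation of ears. -/
structure IsEar (S : Set V) (p : G.Walk u v) : Prop where
  isPath : p.IsPath
  ne : u ≠ v
  start_mem : u ∈ S
  end_mem : v ∈ S
  eq_or_eq : ∀ x ∈ p.support, x ∈ S → x = u ∨ x = v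

lemma exists_append_first_mem (S : Set V) (p : G.Walk u v) (hv : v ∈ S) :
    ∃ z ∈ S, ∃ (q : G.Walk u z) (r : G.Walk z v), p = q.append r ∧
      ∀ x ∈ q.support, x ∈ S → x = z := by
  induction p with
  | nil => exact ⟨_, hv, .nil, .nil, rfl, by simp⟩
  | @cons u _ _ h p ih =>
    by_cases hu : u ∈ S
    · exact ⟨u, hu, .nil, .cons h p, rfl, by simp⟩
    · obtain ⟨z, hz, q, r, rfl, hq⟩ := ih hv
      refine ⟨z, hz, .cons h q, r, rfl, fun x hx hxS => ?_⟩
      rw [Walk.support_cons, List.mem_cons] at hx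
      rcases hx with rfl | hx
      · exact absurd hxS hu
      · exact hq x hx hxS

lemma exists_isEar_cons {S : Set V} (h : G.Adj u w) {p : G.Walk w v} (hp : (Walk.cons h p).IsPath)
    (hu : u ∈ S) (hv : v ∈ S) :
    ∃ (z : V) (q : G.Walk w z) (r : G.Walk z v), p = q.append r ∧ IsEar S (.cons h q) ∧
      u ∉ r.support := by
  obtain ⟨z, hz, q, r, rfl, hq⟩ := exists_append_first_mem S p hv
  obtain ⟨hqr, hup⟩ := (Walk.cons_isPath_iff _ _).mp hp
  rw [Walk.mem_support_append_iff, not_or] at hup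
  refine ⟨z, q, r, rfl, ?_, hup.2⟩
  exact
    { isPath := (Walk.cons_isPath_iff _ _).mpr ⟨hqr.of_append_left, hup.1⟩
      ne := fun huz => hup.2 (huz ▸ r.start_mem_support)
      start_mem := hu
      end_mem := hz
      eq_or_eq := fun x hx hxS => (List.mem_cons.mp hx).imp_right (hq x · hxS) }

lemma exists_isPath_notMem_support (hw : (G.induce {w}ᶜ).Preconnected) (hu : u ≠ w) (hv : v ≠ w) :
    ∃ p : G.Walk u v, p.IsPath ∧ w ∉ p.support := by
  obtain ⟨p, hp⟩ := (hw ⟨u, hu⟩ ⟨v, hv⟩).exists_isPath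
  refine ⟨p.map (Embedding.induce _).toHom,
    hp.map (f := (Embedding.induce _).toHom) Subtype.val_injective, fun h => ?_⟩
  obtain ⟨x, -, hx⟩ := List.mem_map.mp ((Walk.support_map _ p) ▸ h)
  exact x.2 hx

lemma exists_arcs_of_isCycle {a : V} {C : G.Walk a a} (hC : C.IsCycle) (hu : u ∈ C.support)
    (hv : v ∈ C.support) (huv : u ≠ v) :
    ∃ p q : G.Walk u v, p.IsPath ∧ q.IsPath ∧ p.length + q.length = C.length ∧
      ∀ x, x ∈ C.support ↔ x ∈ p.support ∨ x ∈ q.support := by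
  classical
  have hrot : (C.rotate u hu).IsCycle := hC.rotate hu
  obtain ⟨p, q, hpq⟩ := Walk.mem_support_iff_exists_append.mp
    ((C.mem_support_rotate_iff u hu).mpr hv)
  rw [hpq] at hrot
  refine ⟨p, q.reverse, hrot.isPath_of_append_left (Walk.not_nil_of_ne huv.symm),
    (hrot.isPath_of_append_right (Walk.not_nil_of_ne huv)).reverse, ?_, fun x => ?_⟩
  · rw [Walk.length_reverse, ← Walk.length_append, ← hpq, Walk.length_rotate]
  · rw [← C.mem_support_rotate_iff u hu, hpq, Walk.mem_support_append_iff,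
      Walk.support_reverse, List.mem_reverse]

lemma start_notMem_tail_support_of_isPath {p : G.Walk u v} (hp : p.IsPath) :
    u ∉ p.support.tail :=
  (List.nodup_cons.mp (p.cons_tail_support ▸ hp.support_nodup)).1

namespace IsEar

variable {S : Set V} {p q : G.Walk u v}

lemma isCycle_append_reverse (hp : IsEar S p) (hq : q.IsPath) (hqS : ∀ x ∈ q.support, x ∈ S)
    (hlen : 1 < p.length ∨ 1 < q.length) : (p.append q.reverse).IsCycle := by
  refine hp.isPath.isCycle_append hq.reverse (fun x hxp hxq => ?_) (by simpa using hlen)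
  have hu : u ∉ p.support.tail := start_notMem_tail_support_of_isPath hp.isPath
  have hv : v ∉ q.reverse.support.tail := start_notMem_tail_support_of_isPath hq.reverse
  have hxS : x ∈ S := hqS x (by simpa using List.mem_of_mem_tail hxq)
  rcases hp.eq_or_eq x (List.mem_of_mem_tail hxp) hxS with rfl | rfl
  · exact hu hxp
  · exact hv hxq

lemma exists_isCycle_two_mul_length_le {a : V} {C : G.Walk a a} (hC : C.IsCycle)
    (hp : IsEar {x | x ∈ C.support} p) :
    ∃ D : G.Walk u u, D.IsCycle ∧ 2 * p.length + C.length ≤ 2 * D.length := by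
  obtain ⟨q, r, hq, hr, hlen, hmem⟩ := exists_arcs_of_isCycle hC hp.start_mem hp.end_mem hp.ne
  obtain ⟨s, hs, hsC, hsl⟩ : ∃ s : G.Walk u v, s.IsPath ∧ (∀ x ∈ s.support, x ∈ C.support) ∧
      C.length ≤ 2 * s.length := by
    rcases le_total q.length r.length with hle | hle
    · exact ⟨r, hr, fun x hx => (hmem x).mpr (.inr hx), by omega⟩
    · exact ⟨q, hq, fun x hx => (hmem x).mpr (.inl hx), by omega⟩
  have hC_length := hC.three_le_length
  refine ⟨p.append s.reverse, hp.isCycle_append_reverse hs hsC (by omega), ?_⟩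
  rw [Walk.length_append, Walk.length_reverse]
  omega

end IsEar

lemma length_add_le_card_mul_of_isEar_length_le [DecidableEq V] {S : Finset V} {m : ℕ}
    (hm : ∀ (u v : V) (q : G.Walk u v), IsEar (S : Set V) q → q.length ≤ m)
    {p : G.Walk u v} (hp : p.IsPath) (hu : u ∈ S) (hv : v ∈ S) :
    p.length + m ≤ (S.filter (· ∈ p.support)).card * m := by
  induction hn : p.length using Nat.strong_induction_on generalizing u with
  | _ n ih =>
  subst hn
  cases p with
  | nil => simp [Finset.filter_eq', hu]
  | cons h p =>
    obtain ⟨z, q, r, rfl, hear, hur⟩ := exists_isEar_cons h hp hu hv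
    have hhead : q.length + 1 ≤ m := hm _ _ _ hear
    have htail : r.length + m ≤ (S.filter (· ∈ r.support)).card * m :=
      ih r.length (by simp only [Walk.length_cons, Walk.length_append]; omega)
        hp.of_cons.of_append_right hear.end_mem rfl
    have hcard : (S.filter (· ∈ r.support)).card + 1 ≤
        (S.filter (· ∈ (Walk.cons h (q.append r)).support)).card := by
      rw [← Finset.card_insert_of_notMem (a := u) (by simp [hur])]
      refine Finset.card_le_card fun x => ?_
      simp only [Finset.mem_insert, Finset.mem_filter, Walk.support_cons, List.mem_cons,
        Walk.mem_support_append_iff]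
      rintro (rfl | ⟨hxS, hx⟩)
      · exact ⟨hu, .inl rfl⟩
      · exact ⟨hxS, .inr (.inr hx)⟩
    calc (Walk.cons h (q.append r)).length + m = (q.length + 1) + (r.length + m) := by
          simp only [Walk.length_cons, Walk.length_append]; ring
      _ ≤ m + (S.filter (· ∈ r.support)).card * m := add_le_add hhead htail
      _ = ((S.filter (· ∈ r.support)).card + 1) * m := by ring
      _ ≤ _ := Nat.mul_le_mul_right m hcard

end Ears

section CommonCycle

variable {V : Type*} {G : SimpleGraph V} {u v w : V}

lemma exists_isCycle_mem_support_of_adj (hw : (G.induce {w}ᶜ).Preconnected) {a : V}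
    {C : G.Walk a a} (hC : C.IsCycle) (huC : u ∈ C.support) (hwC : w ∈ C.support)
    (hwv : G.Adj w v) :
    ∃ (b : V) (D : G.Walk b b), D.IsCycle ∧ u ∈ D.support ∧ v ∈ D.support := by
  by_cases hvC : v ∈ C.support
  · exact ⟨a, C, hC, huC, hvC⟩
  obtain ⟨t, htC, htw⟩ : ∃ t ∈ C.support, t ≠ w := by
    by_cases haw : a = w
    · exact ⟨C.snd, C.getVert_mem_support 1, haw ▸ (C.adj_snd hC.not_nil).ne'⟩
    · exact ⟨a, C.start_mem_support, haw⟩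
  obtain ⟨p, hp, hwp⟩ := exists_isPath_notMem_support hw hwv.ne' htw
  obtain ⟨z, q, -, -, hear, -⟩ := exists_isEar_cons (S := {x | x ∈ C.support}) hwv
    ((Walk.cons_isPath_iff _ _).mpr ⟨hp, hwp⟩) hwC htC
  obtain ⟨s₁, s₂, hs₁, hs₂, -, hmem⟩ := exists_arcs_of_isCycle hC hwC hear.end_mem hear.ne
  obtain ⟨s, hs, hsC, hus⟩ : ∃ s : G.Walk w z, s.IsPath ∧ (∀ x ∈ s.support, x ∈ C.support) ∧
      u ∈ s.support := by
    rcases (hmem u).mp huC with hu | hu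
    · exact ⟨s₁, hs₁, fun x hx => (hmem x).mpr (.inl hx), hu⟩
    · exact ⟨s₂, hs₂, fun x hx => (hmem x).mpr (.inr hx), hu⟩
  have hvz : v ≠ z := fun h => hvC (h ▸ hear.end_mem)
  have hlen : 1 < (Walk.cons hwv q).length := by
    simpa [Nat.pos_iff_ne_zero] using mt Walk.eq_of_length_eq_zero hvz
  exact ⟨w, _, hear.isCycle_append_reverse hs hsC (.inl hlen),
    (Walk.mem_support_append_iff _ _).mpr (.inr (by simpa using hus)),
    (Walk.mem_support_append_iff _ _).mpr (.inl (by simp))⟩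

variable (hcard : 3 ≤ ENat.card V) (hconn : ∀ v, (G.induce {v}ᶜ).Preconnected)

include hcard hconn

lemma exists_adj_ne (huw : u ≠ w) : ∃ x, G.Adj u x ∧ x ≠ w := by
  obtain ⟨t, htu, htw⟩ := ENat.exists_ne_ne_of_three_le hcard u w
  obtain ⟨p, -, hwp⟩ := exists_isPath_notMem_support (hconn w) huw htw
  exact ⟨p.snd, p.adj_snd (Walk.not_nil_of_ne htu.symm), fun h => hwp (h ▸ p.getVert_mem_support 1)⟩

lemma exists_isCycle_start (u : V) : ∃ C : G.Walk u u, C.IsCycle := by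
  obtain ⟨t, htu, -⟩ := ENat.exists_ne_ne_of_three_le hcard u u
  obtain ⟨x, hux, -⟩ := exists_adj_ne hcard hconn htu.symm
  obtain ⟨y, huy, hyx⟩ := exists_adj_ne hcard hconn hux.ne
  obtain ⟨p, hp, hup⟩ := exists_isPath_notMem_support (hconn u) hux.ne' huy.ne'
  have hlen : p.length ≠ 0 := mt Walk.eq_of_length_eq_zero hyx.symm
  refine ⟨.cons hux (p.concat huy.symm), Walk.isCycle_iff_isPath_tail_and_le_length.mpr ⟨?_, ?_⟩⟩
  · simpa using hp.concat hup huy.symm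
  · rw [Walk.length_cons, Walk.length_concat]
    omega

lemma exists_isCycle_mem_support_mem_support (u v : V) :
    ∃ (a : V) (C : G.Walk a a), C.IsCycle ∧ u ∈ C.support ∧ v ∈ C.support := by
  obtain ⟨t, htu, htv⟩ := ENat.exists_ne_ne_of_three_le hcard u v
  obtain ⟨p, -, -⟩ := exists_isPath_notMem_support (hconn t) htu.symm htv.symm
  have huv := (reachable_iff_reflTransGen u v).mp p.reachable
  clear htv p
  induction huv with
  | refl =>
    obtain ⟨C, hC⟩ := exists_isCycle_start hcard hconn u
    exact ⟨u, C, hC, C.start_mem_support, C.start_mem_support⟩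
  | @tail w v _ hwv ih =>
    obtain ⟨a, C, hC, hu, hw⟩ := ih
    exact exists_isCycle_mem_support_of_adj (hconn w) hC hu hw hwv

end CommonCycle

section PathLength

variable {V : Type*} {G : SimpleGraph V}

lemma card_toFinset_support_le_length [DecidableEq V] {a : V} {C : G.Walk a a} (hC : ¬ C.Nil) :
    C.support.toFinset.card ≤ C.length := by
  have : C.support.toFinset = C.support.tail.toFinset := by
    rw [← Walk.cons_tail_support C, List.toFinset_cons, List.tail_cons,
      Finset.insert_eq_of_mem (by simpa using Walk.end_mem_tail_support hC)]
  simpa [this] using List.toFinset_card_le C.support.tail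

theorem two_mul_length_add_le_sq_of_circumference_le (hcard : 3 ≤ ENat.card V)
    (hconn : ∀ v, (G.induce {v}ᶜ).Preconnected) {c : ℕ}
    (hmax : ∀ (w : V) (d : G.Walk w w), d.IsCycle → d.length ≤ c) {u v : V} {p : G.Walk u v}
    (hp : p.IsPath) : 2 * p.length + c ≤ c ^ 2 := by
  classical
  obtain ⟨a, C, hC, huC, hvC⟩ := exists_isCycle_mem_support_mem_support hcard hconn u v
  set k := C.length
  have hk : 3 ≤ k := hC.three_le_length
  have hkc : k ≤ c := hmax a C hC
  have hear : ∀ (x y : V) (q : G.Walk x y), IsEar (C.support.toFinset : Set V) q →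
      q.length ≤ (2 * c - k) / 2 := by
    intro x y q hq
    rw [List.coe_toFinset] at hq
    obtain ⟨D, hD, hlen⟩ := hq.exists_isCycle_two_mul_length_le hC
    have := hmax x D hD
    omega
  have hsplit : p.length + (2 * c - k) / 2 ≤ k * ((2 * c - k) / 2) :=
    (length_add_le_card_mul_of_isEar_length_le hear hp (by simpa using huC)
      (by simpa using hvC)).trans
      (Nat.mul_le_mul_right _ ((Finset.card_filter_le _ _).trans
        (card_toFinset_support_le_length hC.not_nil)))
  have hmk : 2 * ((2 * c - k) / 2) + k ≤ 2 * c := by omega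
  generalize (2 * c - k) / 2 = m at hsplit hmk
  zify at hk hkc hsplit hmk ⊢
  -- `(k - 1) (2 c - k) = c (c - 1) - (c - k) (c - k + 1)`
  nlinarith [mul_nonneg (sub_nonneg.mpr hkc) (sub_nonneg.mpr hkc)]

end PathLength

section DepthFirstSearch

variable {V : Type*}

/-- `par` is the parent function of an elimination forest of `G` of height at most `n` having, for
each connected component `C` of `G`, a tree with vertex set `C` and root `root C`. As in
`TreedepthLE`, roots are fixed points of `par`. -/
structure IsEliminationForest (G : SimpleGraph V) (root : G.ConnectedComponent → V) (n : ℕ)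
    (par : V → V) : Prop where
  parent_root : ∀ C, par (root C) = root C
  iterate_eq_root : ∀ v, par^[n] v = root (G.connectedComponentMk v)
  ancestor_or_ancestor : ∀ u v, G.Adj u v → (∃ k, par^[k] v = u) ∨ ∃ k, par^[k] u = v

/-- The graph `G` with the vertices of `R` isolated: the vertex deletion `G - R`, but kept on the
vertex type `V`. -/
def isolateVerts (G : SimpleGraph V) (R : Set V) : SimpleGraph V :=
  ((⊤ : G.Subgraph).deleteVerts R).spanningCoe

variable {G : SimpleGraph V} {R : Set V} {u v : V}

lemma isolateVerts_adj : (isolateVerts G R).Adj u v ↔ G.Adj u v ∧ u ∉ R ∧ v ∉ R := by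
  simp only [isolateVerts, Subgraph.spanningCoe_adj, Subgraph.deleteVerts_adj, Subgraph.verts_top,
    Set.mem_univ, Subgraph.top_adj, true_and]
  tauto

lemma isolateVerts_le : isolateVerts G R ≤ G := fun _ _ h => (isolateVerts_adj.mp h).1

lemma eq_of_reachable_isolateVerts (hu : u ∈ R) (h : (isolateVerts G R).Reachable u v) : u = v := by
  obtain ⟨p⟩ := h
  cases p with
  | nil => rfl
  | cons hadj _ => exact absurd hu (isolateVerts_adj.mp hadj).2.1

lemma reachable_isolateVerts (p : G.Walk u v) (hp : ∀ x ∈ p.support, x ∉ R) :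
    (isolateVerts G R).Reachable u v :=
  ⟨p.transfer _ fun e he => by
    induction e with
    | _ x y =>
      exact isolateVerts_adj.mpr ⟨p.adj_of_mem_edges he, hp x (p.fst_mem_support_of_mem_edges he),
        hp y (p.snd_mem_support_of_mem_edges he)⟩⟩

lemma exists_iterate_eq_iterate {α : Type*} {f g : α → α} (h : ∀ x, f x = x ∨ g x = f x)
    (k : ℕ) (x : α) : ∃ j ≤ k, g^[j] x = f^[k] x := by
  induction k with
  | zero => exact ⟨0, le_rfl, rfl⟩
  | succ k ih =>
    obtain ⟨j, hj, hjk⟩ := ih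
    rw [Function.iterate_succ_apply']
    rcases h (f^[k] x) with hfix | hg
    · exact ⟨j, by omega, hjk.trans hfix.symm⟩
    · exact ⟨j + 1, by omega, by rw [Function.iterate_succ_apply', hjk, hg]⟩

section Step

variable {root : G.ConnectedComponent → V}
  {root' : (isolateVerts G (Set.range root)).ConnectedComponent → V} {n : ℕ}

lemma connectedComponentMk_eq_of_reachable_isolateVerts (h : (isolateVerts G R).Reachable u v) :
    G.connectedComponentMk u = G.connectedComponentMk v :=
  ConnectedComponent.sound (h.mono isolateVerts_le)

lemma exists_reachable_isolateVerts_eq_or_adj_root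
    (hroot : ∀ C, G.connectedComponentMk (root C) = C) (v : V) :
    ∃ w, (isolateVerts G (Set.range root)).Reachable w v ∧
      (w = root (G.connectedComponentMk w) ∨ G.Adj (root (G.connectedComponentMk w)) w) := by
  classical
  obtain ⟨p, hp⟩ := (ConnectedComponent.exact (hroot (G.connectedComponentMk v))).exists_isPath
  generalize hx : root (G.connectedComponentMk v) = x at p
  cases p with
  | nil => exact ⟨v, .rfl, .inl hx.symm⟩
  | @cons _ w _ hxw p =>
    have hwv : G.connectedComponentMk w = G.connectedComponentMk v :=
      ConnectedComponent.sound p.reachable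
    refine ⟨w, reachable_isolateVerts p ?_, .inr (by rwa [hwv, hx])⟩
    rintro _ hy ⟨C, rfl⟩
    have hC : C = G.connectedComponentMk v :=
      (hroot C).symm.trans (ConnectedComponent.sound (p.dropUntil _ hy).reachable)
    exact ((Walk.cons_isPath_iff _ _).mp hp).2 (by rwa [← hx, ← hC])

lemma exists_roots_isolateVerts (hroot : ∀ C, G.connectedComponentMk (root C) = C) :
    ∃ root' : (isolateVerts G (Set.range root)).ConnectedComponent → V,
      (∀ D, (isolateVerts G (Set.range root)).connectedComponentMk (root' D) = D) ∧
      ∀ D, root' D = root (G.connectedComponentMk (root' D)) ∨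
        G.Adj (root (G.connectedComponentMk (root' D))) (root' D) := by
  choose f hreach hadj using exists_reachable_isolateVerts_eq_or_adj_root hroot
  exact ⟨fun D => f D.out, fun D => (ConnectedComponent.sound (hreach _)).trans D.out_eq,
    fun D => hadj _⟩

lemma isPath_isolateVerts_length_le
    (hadj : ∀ D, root' D = root (G.connectedComponentMk (root' D)) ∨
      G.Adj (root (G.connectedComponentMk (root' D))) (root' D))
    (hlen : ∀ v (p : G.Walk (root (G.connectedComponentMk v)) v), p.IsPath → p.length ≤ n + 1)
    (p : (isolateVerts G (Set.range root)).Walk (root' (connectedComponentMk _ v)) v)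
    (hp : p.IsPath) : p.length ≤ n := by
  classical
  have hmk := connectedComponentMk_eq_of_reachable_isolateVerts p.reachable
  rcases hadj (connectedComponentMk _ v) with heq | hadj
  · have hnil : p.Nil := by
      by_contra hnil
      exact (isolateVerts_adj.mp (p.adj_snd hnil)).2.1 ⟨_, heq.symm⟩
    simp [Walk.length_eq_zero_iff.mpr hnil]
  · rw [hmk] at hadj
    have hnotMem : root (G.connectedComponentMk v) ∉ p.support := fun hmem =>
      hadj.ne (eq_of_reachable_isolateVerts (Set.mem_range_self _)
        (p.takeUntil _ hmem).reachable.symm)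
    have hpath : (Walk.cons hadj (p.mapLe isolateVerts_le)).IsPath :=
      (Walk.cons_isPath_iff _ _).mpr ⟨hp.mapLe _, by simpa using hnotMem⟩
    simpa using hlen v _ hpath

open Classical in
/-- The parent function obtained from `par'`, a parent function on the forest with roots `root'`, by
attaching each tree to the root, given by `root`, of the component of `G` that contains it. -/
noncomputable def attachRoots (root : G.ConnectedComponent → V)
    (root' : (isolateVerts G (Set.range root)).ConnectedComponent → V) (par' : V → V) (v : V) : V :=
  if v = root' (connectedComponentMk _ v) then root (G.connectedComponentMk v) else par' v

lemma attachRoots_of_eq {par' : V → V} (hv : v = root' (connectedComponentMk _ v)) :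
    attachRoots root root' par' v = root (G.connectedComponentMk v) :=
  if_pos hv

lemma exists_iterate_attachRoots_eq {par' : V → V} (hpar' : ∀ D, par' (root' D) = root' D) (k : ℕ)
    (v : V) : ∃ j ≤ k, (attachRoots root root' par')^[j] v = par'^[k] v := by
  refine exists_iterate_eq_iterate (fun x => ?_) k v
  by_cases hx : x = root' (connectedComponentMk _ x)
  · exact .inl (hx ▸ hpar' _)
  · exact .inr (if_neg hx)

lemma attachRoots_root (hroot : ∀ C, G.connectedComponentMk (root C) = C)
    (hroot' : ∀ D, (isolateVerts G (Set.range root)).connectedComponentMk (root' D) = D)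
    (par' : V → V) (C : G.ConnectedComponent) : attachRoots root root' par' (root C) = root C := by
  have hreach := ConnectedComponent.exact (hroot' (connectedComponentMk _ (root C)))
  rw [attachRoots_of_eq (eq_of_reachable_isolateVerts (Set.mem_range_self C) hreach.symm), hroot]

lemma iterate_attachRoots_eq_root (hroot : ∀ C, G.connectedComponentMk (root C) = C)
    (hroot' : ∀ D, (isolateVerts G (Set.range root)).connectedComponentMk (root' D) = D)
    {par' : V → V} (hpar' : IsEliminationForest (isolateVerts G (Set.range root)) root' n par')
    (v : V) : (attachRoots root root' par')^[n + 1] v = root (G.connectedComponentMk v) := by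
  obtain ⟨j, hj, hjv⟩ := exists_iterate_attachRoots_eq hpar'.parent_root n v
  have hstep : (attachRoots root root' par')^[j + 1] v = root (G.connectedComponentMk v) := by
    rw [Function.iterate_succ_apply', hjv, hpar'.iterate_eq_root,
      attachRoots_of_eq (by rw [hroot']),
      connectedComponentMk_eq_of_reachable_isolateVerts (ConnectedComponent.exact (hroot' _))]
  rw [show n + 1 = (n - j) + (j + 1) by omega, Function.iterate_add_apply, hstep,
    Function.iterate_fixed (attachRoots_root hroot hroot' par' _)]

lemma isEliminationForest_attachRoots (hroot : ∀ C, G.connectedComponentMk (root C) = C)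
    (hroot' : ∀ D, (isolateVerts G (Set.range root)).connectedComponentMk (root' D) = D)
    {par' : V → V} (hpar' : IsEliminationForest (isolateVerts G (Set.range root)) root' n par') :
    IsEliminationForest G root (n + 1) (attachRoots root root' par') := by
  have hiterate := iterate_attachRoots_eq_root hroot hroot' hpar'
  refine ⟨attachRoots_root hroot hroot' par', hiterate, fun u v huv => ?_⟩
  have hmk : G.connectedComponentMk u = G.connectedComponentMk v :=
    ConnectedComponent.sound huv.reachable
  by_cases hu : u ∈ Set.range root
  · obtain ⟨C, rfl⟩ := hu
    exact .inl ⟨n + 1, by rw [hiterate, ← hmk, hroot]⟩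
  by_cases hv : v ∈ Set.range root
  · obtain ⟨C, rfl⟩ := hv
    exact .inr ⟨n + 1, by rw [hiterate, hmk, hroot]⟩
  refine (hpar'.ancestor_or_ancestor u v (isolateVerts_adj.mpr ⟨huv, hu, hv⟩)).imp ?_ ?_ <;>
  · rintro ⟨k, hk⟩
    obtain ⟨j, -, hj⟩ := exists_iterate_attachRoots_eq hpar'.parent_root k _
    exact ⟨j, hj.trans hk⟩

end Step

lemma exists_isEliminationForest (n : ℕ) {root : G.ConnectedComponent → V}
    (hroot : ∀ C, G.connectedComponentMk (root C) = C)
    (hlen : ∀ v (p : G.Walk (root (G.connectedComponentMk v)) v), p.IsPath → p.length ≤ n) :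
    ∃ par, IsEliminationForest G root n par := by
  induction n generalizing G with
  | zero =>
    have hroot_mk (v : V) : root (G.connectedComponentMk v) = v := by
      obtain ⟨p, hp⟩ := (ConnectedComponent.exact (hroot (G.connectedComponentMk v))).exists_isPath
      exact Walk.eq_of_length_eq_zero (Nat.le_zero.mp (hlen v p hp))
    refine ⟨id, fun _ => rfl, fun v => (hroot_mk v).symm, fun u v huv => absurd ?_ huv.ne⟩
    rw [← hroot_mk u, ConnectedComponent.sound huv.reachable, hroot_mk]
  | succ n ih =>
    obtain ⟨root', hroot', hadj⟩ := exists_roots_isolateVerts hroot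
    obtain ⟨par', hpar'⟩ := ih hroot' fun _ => isPath_isolateVerts_length_le hadj hlen
    exact ⟨_, isEliminationForest_attachRoots hroot hroot' hpar'⟩

theorem treedepthLE_of_forall_isPath_length_lt {d : ℕ}
    (hlen : ∀ (u v : V) (p : G.Walk u v), p.IsPath → p.length < d) : TreedepthLE G d := by
  cases d with
  | zero => exact ⟨id, fun _ => rfl, fun u => absurd (hlen u u .nil .nil) (Nat.not_lt_zero _)⟩
  | succ n =>
    obtain ⟨par, hpar⟩ := exists_isEliminationForest (G := G) n (root := Quot.out) Quot.out_eq
      fun v p hp => Nat.lt_succ_iff.mp (hlen _ v p hp)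
    refine ⟨par, fun v => ?_, hpar.ancestor_or_ancestor⟩
    rw [Nat.add_sub_cancel, Function.iterate_succ_apply', hpar.iterate_eq_root, hpar.parent_root]

end DepthFirstSearch

theorem treedepth_le_of_circumference_general {V : Type*} (G : SimpleGraph V)
    (hcard : 3 ≤ ENat.card V) (hconn : ∀ v : V, (G.induce ({v}ᶜ : Set V)).Preconnected) (c : ℕ)
    (hmax : ∀ (w : V) (d : G.Walk w w), d.IsCycle → d.length ≤ c) :
    TreedepthLE G (c ^ 2 / 2) := by
  refine treedepthLE_of_forall_isPath_length_lt fun u v p hp => ?_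
  obtain ⟨C, hC⟩ := exists_isCycle_start hcard hconn u
  have hc : 3 ≤ c := hC.three_le_length.trans (hmax u C hC)
  have hp_length : 2 * p.length + c ≤ c ^ 2 :=
    two_mul_length_add_le_sq_of_circumference_le hcard hconn hmax hp
  omega

/-- A 2-connected graph whose cycles all have length at most c has treedepth at
most c²/2. -/
theorem treedepth_le_of_circumference {V : Type*} [Fintype V] (G : SimpleGraph V)
    (h2 : TwoConnected G) (c : ℕ)
    (hmax : ∀ (w : V) (d : G.Walk w w), d.IsCycle → d.length ≤ c) :
    TreedepthLE G (c ^ 2 / 2) :=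
  treedepth_le_of_circumference_general G
    (by rw [ENat.card_eq_coe_fintype_card]; exact_mod_cast h2.1)
    (fun v => (h2.2 v).preconnected) c hmax
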